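/- arXiv:2211.06521 — 2 statements merged into one kernel-verified Lean document; each statement's English description precedes it below -/
import Mathlib

section
/- Let G be a multigraph with n vertices, let k ≥ 1, and let E' ⊆ E(G) be a set of edges of G that contains all the k-interconnection edges of G. Let F₁, …, F_k be a forest decomposition of G ∖ E' with k forests, and let F = F₁ ∪ … ∪ F_k. Then the spanning subgraph of G with edge set F ∪ E' has at most k(n − 1) + |E'| edges and has exactly the same maximal k-edge-connected subgraphs (the same vertex sets) as G; that is, F ∪ E' is a k-certificate of G. -/
universe u

structure Multigraph (V : Type u) where
  edges : Multiset (Sym2 V)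
  loopless : ∀ e ∈ edges, ¬ e.IsDiag

namespace Multigraph

variable {V : Type u}

/-- Reachability via the edges of a multiset of (undirected) edges. -/
def MReach (F : Multiset (Sym2 V)) : V → V → Prop :=
  Relation.ReflTransGen (fun x y => s(x, y) ∈ F)

/-- Reachability in a multigraph. -/
def Reachable (G : Multigraph V) : V → V → Prop := MReach G.edges

open Classical in
/-- Delete a multiset of edges. -/
noncomputable def deleteEdges (G : Multigraph V) (F : Multiset (Sym2 V)) : Multigraph V :=
  ⟨G.edges - F, fun e he => G.loopless e (Multiset.mem_of_le (tsub_le_self) he)⟩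

/-- `lam G x y` : the minimum number of edges whose deletion disconnects `x` from `y`
(`⊤` if no set of edges disconnects them, e.g. when `x = y`). -/
noncomputable def lam (G : Multigraph V) (x y : V) : ℕ∞ :=
  sInf {n : ℕ∞ | ∃ F : Multiset (Sym2 V), F ≤ G.edges ∧
      ¬ (G.deleteEdges F).Reachable x y ∧ n = (Multiset.card F : ℕ∞)}

open Classical in
/-- The multigraph with edge multiset `F`, discarding self-loops. -/
noncomputable def ofEdges (F : Multiset (Sym2 V)) : Multigraph V :=
  ⟨F.filter (fun e => ¬ e.IsDiag), fun e he => (Multiset.mem_filter.mp he).2⟩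

open Classical in
/-- The subgraph of `G` induced by the vertex set `S`. -/
noncomputable def induce (G : Multigraph V) (S : Set V) : Multigraph V :=
  ⟨G.edges.filter (fun e => ∀ v ∈ e, v ∈ S), fun e he =>
      G.loopless e (Multiset.mem_filter.mp he).1⟩

/-- The induced subgraph `G[S]` is `k`-edge-connected. -/
def IsKEdgeConnectedSet (G : Multigraph V) (k : ℕ) (S : Set V) : Prop :=
  S.Nonempty ∧ ∀ x ∈ S, ∀ y ∈ S, (k : ℕ∞) ≤ (G.induce S).lam x y

/-- `G[S]` is a maximal `k`-edge-connected subgraph of `G`. -/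
def IsMaxKEdgeConnectedSubgraph (G : Multigraph V) (k : ℕ) (S : Set V) : Prop :=
  G.IsKEdgeConnectedSet k S ∧
    ∀ T : Set V, S ⊆ T → G.IsKEdgeConnectedSet k T → T = S


/-- `e` is a `k`-interconnection edge: its two endpoints lie in different maximal
`k`-edge-connected subgraphs of `G`. -/
def IsInterconnectionEdge (G : Multigraph V) (k : ℕ) (e : Sym2 V) : Prop :=
  ¬ ∃ S : Set V, G.IsMaxKEdgeConnectedSubgraph k S ∧ ∀ v ∈ e, v ∈ S

open Classical in
/-- The multiset of `k`-interconnection edges of `G`. -/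
noncomputable def interEdges (G : Multigraph V) (k : ℕ) : Multiset (Sym2 V) :=
  G.edges.filter (G.IsInterconnectionEdge k)

open Classical in
/-- A multiset of edges is a forest: no repeated edges, and every edge is a bridge. -/
def MIsForest (F : Multiset (Sym2 V)) : Prop :=
  F.Nodup ∧ ∀ e ∈ F, ∀ x y : V, e = s(x, y) → ¬ MReach (F.erase e) x y

/-- `F` is a spanning forest of the edge multiset `D`: a forest contained in `D` with the
same reachability relation. -/
def MIsSpanningForestOf (D F : Multiset (Sym2 V)) : Prop :=
  F ≤ D ∧ MIsForest F ∧ ∀ x y : V, MReach F x y ↔ MReach D x y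

open Classical in
/-- `F 0, …, F (k-1)` is a forest decomposition of `D` with `k` forests:
`F i` is a spanning forest of `D` minus the previous forests. -/
def IsForestDecomposition (D : Multigraph V) (k : ℕ) (F : Fin k → Multiset (Sym2 V)) : Prop :=
  ∀ i : Fin k,
    MIsSpanningForestOf (D.edges - ∑ j ∈ Finset.univ.filter (· < i), F j) (F i)

end Multigraph

namespace Multigraph

open Classical

/-- The edge `e` has one end in `X` and the other outside. -/
def Crosses {V : Type u} (X : Set V) (e : Sym2 V) : Prop :=
  ∃ a b, e = s(a, b) ∧ a ∈ X ∧ b ∉ X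

/-- The edge `e` crosses `X` and lies within `S`. -/
def CrossIn {V : Type u} (X S : Set V) (e : Sym2 V) : Prop :=
  Crosses X e ∧ ∀ v ∈ e, v ∈ S

lemma exists_cross {V : Type u} {r : V → V → Prop} {x y : V} (h : Relation.ReflTransGen r x y)
    (X : Set V) (hx : x ∈ X) (hy : y ∉ X) :
    ∃ a b, Relation.ReflTransGen r x a ∧ r a b ∧ a ∈ X ∧ b ∉ X := by
  induction h with
  | refl => exact absurd hx hy
  | @tail b c hab hbc ih =>
    by_cases hb : b ∈ X
    · exact ⟨b, c, hab, hbc, hb, hy⟩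
    · exact ih hb

lemma le_lam_iff {V : Type u} (G : Multigraph V) (k : ℕ) (x y : V) :
    (k : ℕ∞) ≤ G.lam x y ↔
      ∀ X : Set V, x ∈ X → y ∉ X → k ≤ G.edges.countP (Crosses X) := by
  constructor
  · intro h X hx hy
    have h2 : G.lam x y ≤ (Multiset.card (G.edges.filter (Crosses X)) : ℕ∞) := by
      apply sInf_le
      refine ⟨_, Multiset.filter_le _ _, ?_, rfl⟩
      intro hr
      obtain ⟨a, b, -, hab, ha, hb⟩ := exists_cross hr X hx hy
      simp only [deleteEdges] at hab
      rw [Multiset.mem_sub, Multiset.count_filter_of_pos ⟨a, b, rfl, ha, hb⟩] at hab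
      exact lt_irrefl _ hab
    rw [Multiset.countP_eq_card_filter]
    exact_mod_cast h.trans h2
  · intro h
    apply le_sInf
    rintro n ⟨F, hF, hr, rfl⟩
    have h1 := h {z | (G.deleteEdges F).Reachable x z} Relation.ReflTransGen.refl hr
    set X := {z | (G.deleteEdges F).Reachable x z} with hX
    have h0 : (G.edges - F).countP (Crosses X) = 0 := by
      rw [Multiset.countP_eq_zero]
      rintro e he ⟨a, b, rfl, ha, hb⟩
      exact hb (Relation.ReflTransGen.tail ha he)
    have h2 : G.edges.countP (Crosses X) = (G.edges - F).countP (Crosses X)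
        + F.countP (Crosses X) := by
      rw [← Multiset.countP_add, tsub_add_cancel_of_le hF]
    have h3 := Multiset.countP_le_card (Crosses X) F
    exact_mod_cast (by omega : k ≤ Multiset.card F)

lemma kec_iff {V : Type u} (G : Multigraph V) (k : ℕ) (S : Set V) :
    G.IsKEdgeConnectedSet k S ↔ S.Nonempty ∧ ∀ x ∈ S, ∀ y ∈ S, ∀ X : Set V, x ∈ X → y ∉ X →
      k ≤ G.edges.countP (CrossIn X S) := by
  unfold IsKEdgeConnectedSet
  simp only [le_lam_iff, induce, Multiset.countP_filter]
  constructor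
  · rintro ⟨h1, h2⟩
    exact ⟨h1, fun x hx y hy X a b => by
      convert h2 x hx y hy X a b
      exact Iff.rfl⟩
  · rintro ⟨h1, h2⟩
    exact ⟨h1, fun x hx y hy X a b => by
      convert h2 x hx y hy X a b
      exact Iff.rfl⟩

lemma kec_mono {V : Type u} {G H : Multigraph V} (h : H.edges ≤ G.edges) {k : ℕ} {S : Set V}
    (hS : H.IsKEdgeConnectedSet k S) : G.IsKEdgeConnectedSet k S := by
  rw [kec_iff] at *
  exact ⟨hS.1, fun x hx y hy X hxX hyX =>
    (hS.2 x hx y hy X hxX hyX).trans (Multiset.countP_le_of_le _ h)⟩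

lemma countP_imp {α : Type*} (p q : α → Prop) (h : ∀ a, p a → q a) (s : Multiset α) :
    s.countP p ≤ s.countP q := by
  rw [Multiset.countP_eq_card_filter, Multiset.countP_eq_card_filter]
  exact Multiset.card_le_card (Multiset.monotone_filter_right s h)

lemma kec_union {V : Type u} {G : Multigraph V} {k : ℕ} {S T : Set V}
    (hS : G.IsKEdgeConnectedSet k S) (hT : G.IsKEdgeConnectedSet k T) {z : V}
    (hzS : z ∈ S) (hzT : z ∈ T) : G.IsKEdgeConnectedSet k (S ∪ T) := by
  rw [kec_iff] at *
  refine ⟨⟨z, Or.inl hzS⟩, fun x hx y hy X hxX hyX => ?_⟩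
  have key : ∀ U : Set V, U ⊆ S ∪ T →
      G.edges.countP (CrossIn X U) ≤
      G.edges.countP (CrossIn X (S ∪ T)) := fun U hU =>
    countP_imp _ _ (fun e he => ⟨he.1, fun v hv => hU (he.2 v hv)⟩) _
  have kS := key S Set.subset_union_left
  have kT := key T Set.subset_union_right
  by_cases hz : z ∈ X
  · rcases hy with hy | hy
    · exact (hS.2 z hzS y hy X hz hyX).trans kS
    · exact (hT.2 z hzT y hy X hz hyX).trans kT
  · rcases hx with hx | hx
    · exact (hS.2 x hx z hzS X hxX hz).trans kS
    · exact (hT.2 x hx z hzT X hxX hz).trans kT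

lemma max_eq {V : Type u} {G : Multigraph V} {k : ℕ} {S T : Set V}
    (hS : G.IsMaxKEdgeConnectedSubgraph k S) (hT : G.IsMaxKEdgeConnectedSubgraph k T) {z : V}
    (hzS : z ∈ S) (hzT : z ∈ T) : T = S := by
  have h := kec_union hS.1 hT.1 hzS hzT
  rw [← hS.2 _ Set.subset_union_left h]
  exact (hT.2 _ Set.subset_union_right h).symm

lemma exists_max {V : Type u} [Fintype V] {G : Multigraph V} {k : ℕ} {S : Set V}
    (hS : G.IsKEdgeConnectedSet k S) : ∃ T, S ⊆ T ∧ G.IsMaxKEdgeConnectedSubgraph k T := by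
  obtain ⟨T, hST, hT⟩ :=
    (Set.toFinite {T : Set V | G.IsKEdgeConnectedSet k T}).exists_le_maximal hS
  exact ⟨T, hST, hT.1, fun U hTU hU => (hT.2 hU hTU).antisymm hTU⟩

lemma forest_card {V : Type u} [Fintype V] {F : Multiset (Sym2 V)} (hF : MIsForest F) :
    Multiset.card F ≤ Fintype.card V - 1 := by
  obtain ⟨hnd, hb⟩ := hF
  have hloop : ∀ x y, s(x, y) ∈ F → x ≠ y := by
    rintro x y h rfl
    exact hb _ h x x rfl Relation.ReflTransGen.refl
  rcases isEmpty_or_nonempty V with hV | hV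
  · rcases Multiset.empty_or_exists_mem F with rfl | ⟨e, he⟩
    · simp
    · induction e with
      | _ x y => exact hV.elim x
  let A : SimpleGraph V := SimpleGraph.fromEdgeSet {e | e ∈ F}
  have hA : A.IsAcyclic := by
    rw [SimpleGraph.isAcyclic_iff_forall_isBridge]
    intro e he
    induction e with
    | _ x y =>
      have hm : s(x, y) ∈ F := by
        simp only [A, SimpleGraph.edgeSet_fromEdgeSet] at he
        exact he.1
      rw [SimpleGraph.isBridge_iff, SimpleGraph.reachable_iff_reflTransGen]
      intro hr
      apply hb _ hm x y rfl
      refine Relation.ReflTransGen.mono (fun a b hab => ?_) _ _ hr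
      simp only [SimpleGraph.deleteEdges_adj, A, SimpleGraph.fromEdgeSet_adj] at hab
      exact (Multiset.mem_erase_of_ne (by simpa using hab.2)).2 hab.1.1
  obtain ⟨T, hAT, -, hT⟩ :=
    SimpleGraph.connected_top.exists_isTree_le_of_le_of_isAcyclic (le_top : A ≤ ⊤) hA
  have h1 := hT.card_edgeFinset
  have h2 : F.toFinset ⊆ T.edgeFinset := by
    intro e he
    rw [Multiset.mem_toFinset] at he
    rw [SimpleGraph.mem_edgeFinset]
    induction e with
    | _ x y =>
      exact hAT ((SimpleGraph.fromEdgeSet_adj _).2 ⟨he, hloop x y he⟩)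
  have h3 := Finset.card_le_card h2
  rw [Multiset.toFinset_card_of_nodup hnd] at h3
  omega

lemma sum_le {V : Type u} {D : Multigraph V} {k : ℕ} {F : Fin k → Multiset (Sym2 V)}
    (hF : D.IsForestDecomposition k F) : ∑ i, F i ≤ D.edges := by
  have key : ∀ m : ℕ, ∑ j ∈ Finset.univ.filter (fun j : Fin k => (j : ℕ) < m), F j ≤ D.edges := by
    intro m
    induction m with
    | zero => simp
    | succ m ih =>
      by_cases hm : m < k
      · have h1 : Finset.univ.filter (fun j : Fin k => (j : ℕ) < m + 1)
            = insert ⟨m, hm⟩ (Finset.univ.filter (fun j : Fin k => (j : ℕ) < m)) := by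
          ext j
          simp [Fin.ext_iff]
          omega
        rw [h1, Finset.sum_insert (by simp)]
        have h2 := (hF ⟨m, hm⟩).1
        have h3 : Finset.univ.filter (fun j : Fin k => j < ⟨m, hm⟩)
            = Finset.univ.filter (fun j : Fin k => (j : ℕ) < m) := by
          ext j
          simp [Fin.lt_def]
        rw [h3] at h2
        calc _ ≤ _ := add_le_add_left h2 _
          _ = _ := tsub_add_cancel_of_le ih
      · have h1 : Finset.univ.filter (fun j : Fin k => (j : ℕ) < m + 1)
            = Finset.univ.filter (fun j : Fin k => (j : ℕ) < m) := by
          ext j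
          have := j.2
          simp
          omega
        rw [h1]
        exact ih
  have := key k
  simpa using this

lemma main_kec {V : Type u} (G : Multigraph V) (k : ℕ)
    (E' : Multiset (Sym2 V)) (hE' : E' ≤ G.edges)
    (hinter : G.interEdges k ≤ E')
    (F : Fin k → Multiset (Sym2 V))
    (hF : (G.deleteEdges E').IsForestDecomposition k F) (H : Multigraph V)
    (hH : H.edges = (∑ i : Fin k, F i) + E') (hHG : H.edges ≤ G.edges) (S : Set V)
    (hS : G.IsMaxKEdgeConnectedSubgraph k S) : H.IsKEdgeConnectedSet k S := by
  have hS1 := (kec_iff _ _ _).1 hS.1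
  rw [kec_iff]
  refine ⟨hS1.1, fun x hx y hy X hxX hyX => ?_⟩
  set P : Sym2 V → Prop := CrossIn X S with hP
  have hk := hS1.2 x hx y hy X hxX hyX
  by_cases hc : ∀ e ∈ G.edges - H.edges, ¬ P e
  · have h0 : (G.edges - H.edges).countP P = 0 := Multiset.countP_eq_zero.2 hc
    have h2 : G.edges.countP P = (G.edges - H.edges).countP P + H.edges.countP P := by
      rw [← Multiset.countP_add, tsub_add_cancel_of_le hHG]
    change k ≤ G.edges.countP P at hk
    omega
  · push Not at hc
    obtain ⟨e, he, ⟨a, b, rfl, ha, hb⟩, heS⟩ := hc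
    have haS : a ∈ S := heS a (by simp)
    have hstep : ∀ c d, s(c, d) ∈ G.edges - E' → c ∈ S → d ∈ S := by
      intro c d hcd hcS
      have hni : ¬ G.IsInterconnectionEdge k s(c, d) := by
        intro hi
        rw [Multiset.mem_sub] at hcd
        have := Multiset.count_le_of_le s(c, d) hinter
        rw [interEdges, Multiset.count_filter_of_pos hi] at this
        omega
      rw [IsInterconnectionEdge, not_not] at hni
      obtain ⟨T, hT, hTe⟩ := hni
      have := max_eq hS hT hcS (hTe c (by simp))
      exact this ▸ hTe d (by simp)
    have hi : ∀ i, 1 ≤ (F i).countP P := by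
      intro i
      obtain ⟨hle, -, hreach⟩ := hF i
      have hleD : F i ≤ G.edges - E' := hle.trans tsub_le_self
      have hmem : s(a, b) ∈ (G.deleteEdges E').edges
          - ∑ j ∈ Finset.univ.filter (· < i), F j := by
        refine Multiset.mem_of_le ?_ he
        rw [hH, add_comm, ← tsub_tsub]
        exact tsub_le_tsub_left (Finset.sum_le_sum_of_subset (Finset.filter_subset _ _)) _
      have hr : MReach (F i) a b := (hreach a b).2 (Relation.ReflTransGen.single hmem)
      obtain ⟨c, d, hac, hcd, hc, hd⟩ := exists_cross hr X ha hb
      have hcS : c ∈ S := by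
        clear hc hcd
        induction hac with
        | refl => exact haS
        | tail _ h ih => exact hstep _ _ (Multiset.mem_of_le hleD h) ih
      have hdS : d ∈ S := hstep c d (Multiset.mem_of_le hleD hcd) hcS
      refine Multiset.countP_pos.2 ⟨s(c, d), hcd, ⟨c, d, rfl, hc, hd⟩, ?_⟩
      intro v hv
      rcases Sym2.mem_iff.1 hv with rfl | rfl <;> assumption
    rw [hH, Multiset.countP_add]
    have hsum : (∑ i, F i).countP P = ∑ i, (F i).countP P :=
      map_sum (Multiset.countPAddMonoidHom P) F Finset.univ
    have : ∑ i : Fin k, 1 ≤ ∑ i, (F i).countP P := Finset.sum_le_sum fun i _ => hi i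
    simp at this
    omega

end Multigraph

theorem forest_decomposition_gives_certificate {V : Type u} [Fintype V]
    (G : Multigraph V) (k : ℕ) (hk : 1 ≤ k)
    (E' : Multiset (Sym2 V)) (hE' : E' ≤ G.edges)
    (hinter : G.interEdges k ≤ E')
    (F : Fin k → Multiset (Sym2 V))
    (hF : (G.deleteEdges E').IsForestDecomposition k F) :
    Multiset.card ((∑ i : Fin k, F i) + E')
        ≤ k * (Fintype.card V - 1) + Multiset.card E' ∧
      ∀ S : Set V,
        (Multigraph.ofEdges ((∑ i : Fin k, F i) + E')).IsMaxKEdgeConnectedSubgraph k S ↔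
          G.IsMaxKEdgeConnectedSubgraph k S := by
  classical
  have hsum : ∑ i, F i + E' ≤ G.edges := by
    have h := Multigraph.sum_le hF
    have h2 : ∑ i, F i ≤ G.edges - E' := by
      convert h using 1
      unfold Multigraph.deleteEdges
      congr
    calc _ ≤ _ := add_le_add_left h2 _
      _ = _ := tsub_add_cancel_of_le hE'
  constructor
  · rw [Multiset.card_add]
    apply Nat.add_le_add_right
    have h1 : Multiset.card (∑ i, F i) = ∑ i, Multiset.card (F i) :=
      map_sum Multiset.cardHom F Finset.univ
    rw [h1]
    calc _ ≤ ∑ i : Fin k, (Fintype.card V - 1) :=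
          Finset.sum_le_sum fun i _ => Multigraph.forest_card (hF i).2.1
      _ = _ := by simp
  · have hH : (Multigraph.ofEdges ((∑ i : Fin k, F i) + E')).edges = (∑ i : Fin k, F i) + E' :=
      Multiset.filter_eq_self.2 fun e he => G.loopless e (Multiset.mem_of_le hsum he)
    generalize Multigraph.ofEdges ((∑ i : Fin k, F i) + E') = H at hH
    have hHG : H.edges ≤ G.edges := hH ▸ hsum
    have main := Multigraph.main_kec G k E' hE' hinter F hF H hH hHG
    intro S
    constructor
    · intro hS
      obtain ⟨T, hST, hT⟩ := Multigraph.exists_max (Multigraph.kec_mono hHG hS.1)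
      have := hS.2 T hST (main T hT)
      exact this ▸ hT
    · intro hS
      exact ⟨main S hS, fun T hST hT => hS.2 T hST (Multigraph.kec_mono hHG hT)⟩
end

section
/- Let G be a connected multigraph and let x, y be vertices of G with λ_G(x,y) = 1, so that x and y lie in two different 2-edge-connected components of G. Let T be the tree obtained from G by contracting each 2-edge-connected component of G to a single vertex, and let X₁, …, X_ℓ be the 2-edge-connected components of G corresponding to the vertices of the unique path in T from the component containing x to the component containing y (so x ∈ X₁ and y ∈ X_ℓ). Let G' be the multigraph obtained from G by adding one new edge with endpoints x and y, and set U = X₁ ∪ … ∪ X_ℓ. Then: (i) λ_{G'}(u,v) ≥ 2 for every pair of vertices u, v ∈ U; (ii) λ_{G'}(u,v) = λ_G(u,v) for every pair of vertices u, v not both belonging to U; and (iii) U is a 2-edge-connected component of G'. -/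
universe u

namespace Multigraph

variable {V : Type u}

/-- `C` is a `k`-edge-connected component of `G`: a maximal set of pairwise
`k`-edge-connected vertices. -/
def IsKEdgeConnectedComponent (G : Multigraph V) (k : ℕ) (C : Set V) : Prop :=
  (∀ x ∈ C, ∀ y ∈ C, (k : ℕ∞) ≤ G.lam x y) ∧
    ∀ D : Set V, C ⊆ D → (∀ x ∈ D, ∀ y ∈ D, (k : ℕ∞) ≤ G.lam x y) → D = C

/-- Add one new edge with endpoints `x` and `y` (discarded if it would be a self-loop). -/
noncomputable def addEdge (G : Multigraph V) (x y : V) : Multigraph V :=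
  ofEdges (s(x, y) ::ₘ G.edges)

end Multigraph

namespace Multigraph

theorem MReach.mono {V : Type u} {E F : Multiset (Sym2 V)} (h : ∀ e ∈ E, e ∈ F) {a b : V}
    (hr : MReach E a b) : MReach F a b :=
  Relation.ReflTransGen.mono (fun _ _ hh => h _ hh) _ _ hr

theorem MReach.symm {V : Type u} {E : Multiset (Sym2 V)} {a b : V}
    (hr : MReach E a b) : MReach E b a := by
  unfold MReach at *
  induction hr with
  | refl => exact Relation.ReflTransGen.refl
  | tail _ h ih => exact Relation.ReflTransGen.head (by rw [Sym2.eq_swap]; exact h) ih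

theorem MReach.trans {V : Type u} {E : Multiset (Sym2 V)} {a b c : V}
    (h1 : MReach E a b) (h2 : MReach E b c) : MReach E a c :=
  Relation.ReflTransGen.trans h1 h2

theorem MReach.edge {V : Type u} {E : Multiset (Sym2 V)} {a b : V}
    (h1 : s(a, b) ∈ E) : MReach E a b :=
  Relation.ReflTransGen.single h1

theorem MReach.rfl' {V : Type u} {E : Multiset (Sym2 V)} {a : V} : MReach E a a :=
  Relation.ReflTransGen.refl

open Classical in
theorem le_lam_iff_s13 {V : Type u} (G : Multigraph V) (u v : V) (n : ℕ∞) :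
    n ≤ G.lam u v ↔ ∀ F : Multiset (Sym2 V), ¬ MReach (G.edges - F) u v →
      n ≤ (Multiset.card F : ℕ∞) := by
  unfold lam
  rw [le_sInf_iff]
  constructor
  · intro h F hF
    have h1 := h (Multiset.card (F ∩ G.edges) : ℕ∞) ⟨F ∩ G.edges, Multiset.inter_le_right, by
      intro hr
      apply hF
      refine MReach.mono ?_ hr
      intro e he
      simp only [deleteEdges] at he
      rw [← Multiset.count_pos] at he ⊢
      simp only [Multiset.count_sub, Multiset.count_inter] at he ⊢
      omega, rfl⟩
    refine h1.trans ?_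
    exact_mod_cast Multiset.card_le_card (Multiset.inter_le_left)
  · rintro h _ ⟨F, -, hF, rfl⟩
    exact h F hF

open Classical in
theorem two_le_lam_iff {V : Type u} (G : Multigraph V) (u v : V) :
    (2 : ℕ∞) ≤ G.lam u v ↔ ∀ e : Sym2 V, MReach (G.edges - {e}) u v := by
  rw [le_lam_iff_s13]
  constructor
  · intro h e
    by_contra hc
    have := h _ hc
    simp at this
  · intro h F hF
    by_contra hc
    have hc : Multiset.card F < 2 := by
      rw [not_le] at hc
      exact_mod_cast hc
    have h2 : Multiset.card F = 0 ∨ Multiset.card F = 1 := by omega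
    rcases h2 with h2 | h2
    · rw [Multiset.card_eq_zero] at h2
      subst h2
      apply hF
      refine MReach.mono ?_ (h s(u, u))
      intro e he
      simpa using Multiset.mem_of_le tsub_le_self he
    · obtain ⟨e, rfl⟩ := Multiset.card_eq_one.mp h2
      exact hF (h e)

theorem lam_comm {V : Type u} (G : Multigraph V) (u v : V) : G.lam u v = G.lam v u := by
  apply eq_of_forall_le_iff
  intro n
  rw [le_lam_iff_s13, le_lam_iff_s13]
  constructor <;> intro h F hF <;> exact h F (fun hh => hF hh.symm)

theorem addEdge_edges {V : Type u} (G : Multigraph V) {x y : V} (hxy : x ≠ y) :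
    (G.addEdge x y).edges = s(x, y) ::ₘ G.edges := by
  classical
  simp only [addEdge, ofEdges]
  rw [Multiset.filter_eq_self]
  intro e he
  rcases Multiset.mem_cons.mp he with rfl | he
  · simpa using hxy
  · exact G.loopless e he

open Classical in
theorem mem_component {V : Type u} (G : Multigraph V) {C : Set V}
    (hC : G.IsKEdgeConnectedComponent 2 C) {c z : V} (hc : c ∈ C) (hz : (2 : ℕ∞) ≤ G.lam z c) :
    z ∈ C := by
  have hC1 : ∀ p ∈ C, ∀ q ∈ C, (2 : ℕ∞) ≤ G.lam p q := fun p hp q hq => by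
    exact_mod_cast hC.1 p hp q hq
  simp only [two_le_lam_iff] at hC1 hz
  have key : ∀ p ∈ insert z C, ∀ e, MReach (G.edges - {e}) p c := by
    intro p hp e
    rcases Set.mem_insert_iff.mp hp with rfl | hp
    · convert hz e
    · convert hC1 p hp c hc e
  have := hC.2 (insert z C) (Set.subset_insert _ _) (by
    intro p hp q hq
    have : (2 : ℕ∞) ≤ G.lam p q := by
      rw [two_le_lam_iff]
      intro e
      convert (key p hp e).trans (key q hq e).symm
    exact_mod_cast this)
  rw [← this]
  exact Set.mem_insert _ _

theorem component_eq {V : Type u} (G : Multigraph V) {C D : Set V}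
    (hC : G.IsKEdgeConnectedComponent 2 C) (hD : G.IsKEdgeConnectedComponent 2 D) {c : V}
    (hc : c ∈ C) (hd : c ∈ D) : C = D := by
  ext z
  constructor
  · intro hz
    exact G.mem_component hD hd (by exact_mod_cast hC.1 z hz c hc)
  · intro hz
    exact G.mem_component hC hc (by exact_mod_cast hD.1 z hz c hd)

/-- A walk using an additional edge. -/
theorem MReach.cons_cases {V : Type u} {E : Multiset (Sym2 V)} {x y u v : V}
    (h : MReach (s(x, y) ::ₘ E) u v) :
    MReach E u v ∨ (MReach E u x ∧ MReach E y v) ∨ (MReach E u y ∧ MReach E x v) := by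
  unfold MReach at h
  induction h with
  | refl => exact Or.inl MReach.rfl'
  | @tail b c _ hs ih =>
    rcases Multiset.mem_cons.mp hs with he | he
    · rcases Sym2.eq_iff.mp he with ⟨rfl, rfl⟩ | ⟨rfl, rfl⟩
      · rcases ih with ih | ⟨h1, h2⟩ | ⟨h1, h2⟩
        · exact Or.inr (Or.inl ⟨ih, MReach.rfl'⟩)
        · exact Or.inr (Or.inl ⟨h1, MReach.rfl'⟩)
        · exact Or.inl h1
      · rcases ih with ih | ⟨h1, h2⟩ | ⟨h1, h2⟩
        · exact Or.inr (Or.inr ⟨ih, MReach.rfl'⟩)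
        · exact Or.inl h1
        · exact Or.inr (Or.inr ⟨h1, MReach.rfl'⟩)
    · have hbc : MReach E b c := MReach.edge he
      rcases ih with ih | ⟨h1, h2⟩ | ⟨h1, h2⟩
      · exact Or.inl (ih.trans hbc)
      · exact Or.inr (Or.inl ⟨h1, h2.trans hbc⟩)
      · exact Or.inr (Or.inr ⟨h1, h2.trans hbc⟩)

open Classical in
theorem mem_sub_singleton {V : Type u} {E : Multiset (Sym2 V)} {e f : Sym2 V} (h : f ∈ E)
    (hne : f ≠ e) : f ∈ E - {e} := by
  rw [Multiset.sub_singleton]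
  exact (Multiset.mem_erase_of_ne hne).mpr h

open Classical in
theorem MReach.pass {V : Type u} {E F : Multiset (Sym2 V)} {w w' a b : V}
    (hF : ∀ e ∈ F, e ∈ E) (h : MReach F a b) :
    MReach (E - {s(w, w')}) a b ∨ MReach F a w' := by
  unfold MReach at h
  induction h with
  | refl => exact Or.inl MReach.rfl'
  | @tail b c hb hs ih =>
    rcases ih with ih | ih
    · by_cases he : s(b, c) = s(w, w')
      · rcases Sym2.eq_iff.mp he with ⟨rfl, rfl⟩ | ⟨rfl, rfl⟩
        · exact Or.inr (Relation.ReflTransGen.tail hb hs)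
        · exact Or.inr hb
      · exact Or.inl (ih.trans (MReach.edge (mem_sub_singleton (hF _ hs) he)))
    · exact Or.inr ih

open Classical in
/-- Bridge separating an outside vertex from `U`. -/
theorem exists_bridge {V : Type u} (G : Multigraph V) (U : Set V) (x : V) (hx : x ∈ U)
    (hclosed : ∀ z ∈ U, ∀ w, (2 : ℕ∞) ≤ G.lam w z → w ∈ U)
    (hU : ∀ w w' : V, w ∉ U → ∀ p ∈ U, ∀ q ∈ U,
      MReach (G.edges - {s(w, w')}) p q)
    (u : V) (hr : MReach G.edges u x) (hu : u ∉ U) :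
    ∃ w w', w ∉ U ∧ w' ∈ U ∧ s(w, w') ∈ G.edges ∧ ∀ z ∈ U,
      ¬ MReach (G.edges - {s(w, w')}) u z := by
  classical
  unfold MReach at hr
  induction hr using Relation.ReflTransGen.head_induction_on with
  | refl => exact absurd hx hu
  | @head a c hs _ ih =>
    by_cases hc : c ∈ U
    · refine ⟨a, c, hu, hc, hs, ?_⟩
      intro z hz hr
      apply hu
      apply hclosed c hc
      rw [two_le_lam_iff]
      intro e
      by_cases he : s(a, c) = e
      · subst he
        have h1 := hU a c hu z hz c hc
        exact MReach.trans (by convert hr) (by convert h1)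
      · exact MReach.edge (mem_sub_singleton hs he)
    · obtain ⟨w, w', hw, hw', he, hsep⟩ := ih hc
      refine ⟨w, w', hw, hw', he, ?_⟩
      intro z hz hr
      apply hsep z hz
      have h1 : s(c, a) ∈ G.edges - {s(w, w')} := by
        apply mem_sub_singleton
        · rw [Sym2.eq_swap]; exact hs
        · intro heq
          rcases Sym2.eq_iff.mp heq with ⟨rfl, rfl⟩ | ⟨rfl, rfl⟩
          · exact hu hw'
          · exact hc hw'
      exact (MReach.edge (by convert h1)).trans hr

open Classical in
theorem lam_addEdge_eq {V : Type u} (G : Multigraph V) (U : Set V) {x y : V} (hxy : x ≠ y)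
    (hx : x ∈ U) (hy : y ∈ U) (hconn : ∀ u v : V, G.Reachable u v)
    (hclosed : ∀ z ∈ U, ∀ w, (2 : ℕ∞) ≤ G.lam w z → w ∈ U)
    (hU : ∀ w w' : V, w ∉ U → ∀ p ∈ U, ∀ q ∈ U,
      MReach (G.edges - {s(w, w')}) p q)
    (u v : V) (hu : u ∉ U) : (G.addEdge x y).lam u v = G.lam u v := by
  classical
  obtain ⟨w, w', hw, hw', he, hsep⟩ := G.exists_bridge U x hx hclosed hU u (hconn u x) hu
  apply le_antisymm
  · rw [le_lam_iff_s13]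
    intro F hF
    have hle := (le_lam_iff_s13 (G.addEdge x y) u v _).mp le_rfl
    rw [addEdge_edges G hxy] at hle
    by_cases hv : MReach (G.edges - {s(w, w')}) u v
    · apply hle
      intro hr
      have hr2 : MReach (s(x, y) ::ₘ (G.edges - F)) u v := by
        refine MReach.mono ?_ hr
        intro f hf
        rw [Multiset.mem_cons]
        by_cases hfe : f = s(x, y)
        · exact Or.inl hfe
        · right
          rw [← Multiset.count_pos] at hf ⊢
          simpa only [Multiset.count_sub, Multiset.count_cons_of_ne hfe] using hf
      have hsub : ∀ e ∈ G.edges - F, e ∈ G.edges := fun e he =>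
        Multiset.mem_of_le tsub_le_self he
      have hp : ∀ z ∈ U, ∀ t, MReach (G.edges - {s(w, w')}) u t → MReach (G.edges - F) t z →
          MReach (G.edges - F) t w' := by
        intro z hz t ht htz
        rcases MReach.pass (w := w) (w' := w') hsub htz with h | h
        · exact absurd (ht.trans h) (by convert hsep z hz)
        · exact h
      apply hF
      rcases hr2.cons_cases with h | ⟨h1, h2⟩ | ⟨h1, h2⟩
      · exact h
      · exact (hp x hx u MReach.rfl' h1).trans (hp y hy v hv h2.symm).symm
      · exact (hp y hy u MReach.rfl' h1).trans (hp x hx v hv h2.symm).symm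
    · have h1 : (G.addEdge x y).lam u v ≤ 1 := by
        have := hle {s(w, w')} (by
          intro hr
          have hr2 : MReach (s(x, y) ::ₘ (G.edges - {s(w, w')})) u v := by
            refine MReach.mono ?_ hr
            intro f hf
            rw [Multiset.mem_cons]
            by_cases hfe : f = s(x, y)
            · exact Or.inl hfe
            · right
              rw [← Multiset.count_pos] at hf ⊢
              simpa only [Multiset.count_sub, Multiset.count_cons_of_ne hfe] using hf
          rcases hr2.cons_cases with h | ⟨h1, h2⟩ | ⟨h1, h2⟩
          · exact hv h
          · exact absurd h1 (by convert hsep x hx)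
          · exact absurd h1 (by convert hsep y hy))
        simpa using this
      refine h1.trans ?_
      have : 1 ≤ Multiset.card F := by
        by_contra hc
        have : F = 0 := by
          rw [← Multiset.card_eq_zero]; omega
        subst this
        apply hF
        have h0 : MReach G.edges u v := hconn u v
        simpa using h0
      exact_mod_cast this
  · rw [le_lam_iff_s13]
    intro F hF
    have hle := (le_lam_iff_s13 G u v _).mp le_rfl
    apply hle
    intro hr
    apply hF
    refine MReach.mono ?_ hr
    intro e he
    rw [addEdge_edges G hxy]
    exact Multiset.mem_of_le (tsub_le_tsub_right (Multiset.le_cons_self _ _) _) he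

end Multigraph

theorem insert_bridge_case_two_edge_components {V : Type u} [Fintype V]
    (G : Multigraph V) (x y : V) (hxy : x ≠ y)
    (hconn : ∀ u v : V, G.Reachable u v)
    (hlam : G.lam x y = 1)
    (ℓ : ℕ) (X : Fin (ℓ + 1) → Set V)
    (hcomp : ∀ i, G.IsKEdgeConnectedComponent 2 (X i))
    (hinj : Function.Injective X)
    (hx : x ∈ X 0) (hy : y ∈ X (Fin.last ℓ))
    (hpath : ∀ i : Fin ℓ, ∃ a ∈ X i.castSucc, ∃ b ∈ X i.succ, s(a, b) ∈ G.edges) :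
    (∀ u ∈ ⋃ i, X i, ∀ v ∈ ⋃ i, X i, (2 : ℕ∞) ≤ (G.addEdge x y).lam u v) ∧
      (∀ u v : V, ¬(u ∈ ⋃ i, X i ∧ v ∈ ⋃ i, X i) →
        (G.addEdge x y).lam u v = G.lam u v) ∧
      (G.addEdge x y).IsKEdgeConnectedComponent 2 (⋃ i, X i) := by
  classical
  have hC1 : ∀ i, ∀ p ∈ X i, ∀ q ∈ X i, ∀ e, Multigraph.MReach (G.edges - {e}) p q := by
    intro i p hp q hq
    rw [← Multigraph.two_le_lam_iff]
    exact_mod_cast (hcomp i).1 p hp q hq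
  have hidx : ∀ i j c, c ∈ X i → c ∈ X j → i = j := fun i j c h1 h2 =>
    hinj (G.component_eq (hcomp i) (hcomp j) h1 h2)
  have hxU : x ∈ ⋃ i, X i := Set.mem_iUnion.mpr ⟨_, hx⟩
  have hyU : y ∈ ⋃ i, X i := Set.mem_iUnion.mpr ⟨_, hy⟩
  choose a ha b hb hab using hpath
  -- forward and backward propagation
  have fwd : ∀ (e : Sym2 V) (k : Fin (ℓ + 1)),
      (∀ j : Fin ℓ, j.val < k.val → s(a j, b j) ≠ e) →
      ∀ u ∈ X k, Multigraph.MReach (G.edges - {e}) u x := by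
    intro e k
    induction k using Fin.induction with
    | zero => intro _ u hu; exact hC1 0 u hu x hx e
    | succ i ih =>
      intro hj u hu
      have h1 := ih (fun j hlt => hj j (by simp at hlt ⊢; omega)) (a i) (ha i)
      have h2 : Multigraph.MReach (G.edges - {e}) (a i) (b i) :=
        Multigraph.MReach.edge (Multigraph.mem_sub_singleton (hab i) (hj i (by simp)))
      exact (hC1 _ u hu _ (hb i) e).trans (h2.symm.trans h1)
  have bwd : ∀ (e : Sym2 V) (k : Fin (ℓ + 1)),
      (∀ j : Fin ℓ, k.val ≤ j.val → s(a j, b j) ≠ e) →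
      ∀ u ∈ X k, Multigraph.MReach (G.edges - {e}) u y := by
    intro e k
    induction k using Fin.reverseInduction with
    | last => intro _ u hu; exact hC1 _ u hu y hy e
    | cast i ih =>
      intro hj u hu
      have h1 := ih (fun j hlt => hj j (by simp at hlt ⊢; omega)) (b i) (hb i)
      have h2 : Multigraph.MReach (G.edges - {e}) (a i) (b i) :=
        Multigraph.MReach.edge (Multigraph.mem_sub_singleton (hab i) (hj i (by simp)))
      exact (hC1 _ u hu _ (ha i) e).trans (h2.trans h1)
  have huniq : ∀ i j : Fin ℓ, s(a i, b i) = s(a j, b j) → i = j := by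
    intro i j h
    rcases Sym2.eq_iff.mp h with ⟨h1, h2⟩ | ⟨h1, h2⟩
    · have := hidx _ _ _ (ha i) (h1 ▸ ha j)
      exact Fin.castSucc_injective _ this
    · have e1 := hidx _ _ _ (ha i) (h1 ▸ hb j)
      have e2 := hidx _ _ _ (hb i) (h2 ▸ ha j)
      rw [Fin.ext_iff] at e1 e2
      simp at e1 e2
      omega
  have hclosed : ∀ z ∈ ⋃ i, X i, ∀ w, (2 : ℕ∞) ≤ G.lam w z → w ∈ ⋃ i, X i := by
    intro z hz w hw
    obtain ⟨i, hi⟩ := Set.mem_iUnion.mp hz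
    exact Set.mem_iUnion.mpr ⟨i, G.mem_component (hcomp i) hi hw⟩
  have hU : ∀ w w' : V, w ∉ ⋃ i, X i → ∀ p ∈ ⋃ i, X i, ∀ q ∈ ⋃ i, X i,
      Multigraph.MReach (G.edges - {s(w, w')}) p q := by
    intro w w' hw
    have h1 : ∀ p ∈ ⋃ i, X i, Multigraph.MReach (G.edges - {s(w, w')}) p x := by
      intro p hp
      obtain ⟨i, hi⟩ := Set.mem_iUnion.mp hp
      refine fwd _ i ?_ p hi
      intro j _ heq
      apply hw
      rcases Sym2.eq_iff.mp heq with ⟨h1, h2⟩ | ⟨h1, h2⟩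
      · exact Set.mem_iUnion.mpr ⟨_, h1 ▸ ha j⟩
      · exact Set.mem_iUnion.mpr ⟨_, h2 ▸ hb j⟩
    intro p hp q hq
    exact (h1 p hp).trans (h1 q hq).symm
  have part1 : ∀ u ∈ ⋃ i, X i, ∀ v ∈ ⋃ i, X i, (2 : ℕ∞) ≤ (G.addEdge x y).lam u v := by
    intro u hu v hv
    rw [Multigraph.two_le_lam_iff]
    intro e
    rw [Multigraph.addEdge_edges G hxy]
    by_cases hexy : e = s(x, y)
    · subst hexy
      have h0 : Multigraph.MReach G.edges u v := hconn u v
      simpa using h0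
    have hmono : ∀ p q, Multigraph.MReach (G.edges - {e}) p q →
        Multigraph.MReach ((s(x, y) ::ₘ G.edges) - {e}) p q := by
      intro p q h
      refine Multigraph.MReach.mono ?_ h
      intro f hf
      exact Multiset.mem_of_le (tsub_le_tsub_right (Multiset.le_cons_self _ _) _) hf
    have hyx : Multigraph.MReach ((s(x, y) ::ₘ G.edges) - {e}) y x :=
      (Multigraph.MReach.edge (Multigraph.mem_sub_singleton (Multiset.mem_cons_self _ _)
        (Ne.symm hexy))).symm
    have h1 : ∀ p ∈ ⋃ i, X i, Multigraph.MReach ((s(x, y) ::ₘ G.edges) - {e}) p x := by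
      intro p hp
      obtain ⟨k, hk⟩ := Set.mem_iUnion.mp hp
      by_cases hf : ∀ j : Fin ℓ, j.val < k.val → s(a j, b j) ≠ e
      · exact hmono _ _ (fwd e k hf p hk)
      · push Not at hf
        obtain ⟨i, hi, hie⟩ := hf
        refine (hmono _ _ (bwd e k ?_ p hk)).trans hyx
        intro j hj hje
        have := huniq i j (hie.trans hje.symm)
        subst this
        omega
    exact (h1 u hu).trans (h1 v hv).symm
  have part2 : ∀ u v : V, ¬(u ∈ ⋃ i, X i ∧ v ∈ ⋃ i, X i) →
        (G.addEdge x y).lam u v = G.lam u v := by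
    intro u v huv
    by_cases hu : u ∈ ⋃ i, X i
    · have hv : v ∉ ⋃ i, X i := fun hv => huv ⟨hu, hv⟩
      rw [Multigraph.lam_comm, Multigraph.lam_comm G]
      exact G.lam_addEdge_eq _ hxy hxU hyU hconn hclosed (by convert hU) v u hv
    · exact G.lam_addEdge_eq _ hxy hxU hyU hconn hclosed (by convert hU) u v hu
  refine ⟨part1, part2, fun p hp q hq => by exact_mod_cast part1 p hp q hq, ?_⟩
  intro D hUD hD
  refine Set.Subset.antisymm ?_ hUD
  intro z hz
  by_contra hzU
  have h1 : (2 : ℕ∞) ≤ (G.addEdge x y).lam z x := by exact_mod_cast hD z hz x (hUD hxU)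
  rw [part2 z x (fun h => hzU h.1)] at h1
  exact hzU (hclosed x hxU z h1)
end
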